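/- Let X, Y, Z, W be integers (or rational numbers) satisfying X^4 + Y^4 = Z^4 + W^4. Define X2 = X*((W^4*Y^4 + 2*W^4*Z^4 + Y^4*Z^4)*X^4 - 4*W^2*X^2*Y^2*Z^2*(W^4 - Z^4) + W^4*Z^4*(W^4 + 2*Y^4 + Z^4)), Y2 = Y*((W^4 + Z^4)*X^8 - (W^8 - 6*W^4*Z^4 + Z^8)*X^4 + W^4*Z^4*(W^4 + Z^4)), Z2 = Z*(W^4*X^8 + 4*W^2*Y^2*Z^2*X^6 - (W^8 + 2*W^4*Y^4 - 2*W^4*Z^4 - Y^4*Z^4)*X^4 + 4*W^6*Y^2*Z^2*X^2 - W^4*Y^4*Z^4), and W2 = W*(X^8*Z^4 - 4*W^2*Y^2*Z^2*X^6 + (W^4*Y^4 + 2*W^4*Z^4 - 2*Y^4*Z^4 - Z^8)*X^4 - 4*W^2*Y^2*Z^6*X^2 - W^4*Y^4*Z^4). Then X2^4 + Y2^4 = Z2^4 + W2^4. -/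

import Mathlib

/-- The fourth power of `p + q * s` when `s` is a square root of `N`. -/
theorem add_mul_sqrt_pow_four {R : Type*} [CommRing R] {s N : R} (hs : s ^ 2 = N) (p q : R) :
    (p + q * s) ^ 4 =
      p ^ 4 + 6 * p ^ 2 * q ^ 2 * N + q ^ 4 * N ^ 2 + 4 * p * q * (p ^ 2 + q ^ 2 * N) * s := by
  subst hs
  ring

/-- Richmond's second solution expressed through the fourth powers `a`, `d`, `b`, `c` of the
coordinates `X`, `Y`, `Z`, `W` and the square `s` of their product. -/
theorem richmond_identity {R : Type*} [CommRing R] {a b c d s : R}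
    (h : d = b + c - a) (hs : s ^ 2 = a * b * c * d) :
    a * (((c * d + 2 * c * b + d * b) * a + c * b * (c + 2 * d + b)) + (-4 * (c - b)) * s) ^ 4
      + d * ((c + b) * a ^ 2 - (c ^ 2 - 6 * c * b + b ^ 2) * a + c * b * (c + b)) ^ 4 =
    b * ((c * a ^ 2 - (c ^ 2 + 2 * c * d - 2 * c * b - d * b) * a - c * d * b)
        + (4 * (a + c)) * s) ^ 4
      + c * ((a ^ 2 * b + (c * d + 2 * c * b - 2 * d * b - b ^ 2) * a - c * d * b)
        + (-4 * (a + b)) * s) ^ 4 := by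
  simp only [add_mul_sqrt_pow_four hs]
  subst h
  ring

theorem new_solution_two (X Y Z W : ℤ)
    (h : X^4 + Y^4 = Z^4 + W^4)
    (X2 Y2 Z2 W2 : ℤ)
    (hX2 : X2 = X*((W^4*Y^4 + 2*W^4*Z^4 + Y^4*Z^4)*X^4 - 4*W^2*X^2*Y^2*Z^2*(W^4 - Z^4)
      + W^4*Z^4*(W^4 + 2*Y^4 + Z^4)))
    (hY2 : Y2 = Y*((W^4 + Z^4)*X^8 - (W^8 - 6*W^4*Z^4 + Z^8)*X^4 + W^4*Z^4*(W^4 + Z^4)))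
    (hZ2 : Z2 = Z*(W^4*X^8 + 4*W^2*Y^2*Z^2*X^6 - (W^8 + 2*W^4*Y^4 - 2*W^4*Z^4 - Y^4*Z^4)*X^4
      + 4*W^6*Y^2*Z^2*X^2 - W^4*Y^4*Z^4))
    (hW2 : W2 = W*(X^8*Z^4 - 4*W^2*Y^2*Z^2*X^6 + (W^4*Y^4 + 2*W^4*Z^4 - 2*Y^4*Z^4 - Z^8)*X^4
      - 4*W^2*Y^2*Z^6*X^2 - W^4*Y^4*Z^4)) :
    X2^4 + Y2^4 = Z2^4 + W2^4 := by
  have hd : Y ^ 4 = Z ^ 4 + W ^ 4 - X ^ 4 := by linarith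
  have hs : ((X * Y * Z * W) ^ 2) ^ 2 = X ^ 4 * Z ^ 4 * W ^ 4 * Y ^ 4 := by ring
  have key := richmond_identity hd hs
  subst hX2 hY2 hZ2 hW2
  simp only [mul_pow _ _ 4]
  convert key using 4 <;> ring
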